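/- Let Y*, Y ∈ ℝ^{p×r}_* and X* := Y*Y*ᵀ. Then: (ii) ‖2(YYᵀ − X*)Y‖_F ≥ 2(‖Y‖³ − ‖Y‖·‖Y*‖²); in particular, if ‖Y‖ > β‖Y*‖ for some β > 1, then ‖2(YYᵀ − X*)Y‖_F > 2(β³ − β)‖Y*‖³. (iii) ⟨2(YYᵀ − X*)Y, Y⟩ ≥ 2‖YYᵀ‖²_F − 2‖YYᵀ‖_F·‖X*‖_F; in particular, if ‖YYᵀ‖_F > γ‖X*‖_F for some γ > 1, then ⟨2(YYᵀ − X*)Y, Y⟩ > 2(1 − 1/γ)·‖YYᵀ‖²_F. -/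

import Mathlib

open Matrix

/-- Trace inner product `⟨A,B⟩ = tr(AᵀB)`. -/
noncomputable def trInner {m n : ℕ} (A B : Matrix (Fin m) (Fin n) ℝ) : ℝ :=
  ∑ i, ∑ j, A i j * B i j

/-- Frobenius norm. -/
noncomputable def frob {m n : ℕ} (A : Matrix (Fin m) (Fin n) ℝ) : ℝ :=
  Real.sqrt (∑ i, ∑ j, (A i j) ^ 2)

open scoped Classical in
/-- The `i`-th largest eigenvalue (1-indexed, `1 ≤ i ≤ n`) of a Hermitian matrix; junk value 0
otherwise. -/
noncomputable def eigVal {n : ℕ} (A : Matrix (Fin n) (Fin n) ℝ) (i : ℕ) : ℝ :=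
  if hA : A.IsHermitian then
    if h : n - i < n then hA.eigenvalues (Tuple.sort hA.eigenvalues ⟨n - i, h⟩) else 0
  else 0

/-- The `i`-th largest singular value (1-indexed) of `Y`, so `sval Y 1 = ‖Y‖` (spectral norm)
and `sval Y r` is the least singular value. -/
noncomputable def sval {p r : ℕ} (Y : Matrix (Fin p) (Fin r) ℝ) (i : ℕ) : ℝ :=
  Real.sqrt (eigVal (Yᵀ * Y) i)

/-- `Q` is an orthogonal matrix. -/
def IsOrtho {r : ℕ} (Q : Matrix (Fin r) (Fin r) ℝ) : Prop := Qᵀ * Q = 1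

/-- The quotient distance `d(Y₁,Y₂) = min_{Q ∈ O(r)} ‖Y₂Q − Y₁‖_F`. -/
noncomputable def dOrth {p r : ℕ} (Y₁ Y₂ : Matrix (Fin p) (Fin r) ℝ) : ℝ :=
  sInf {c | ∃ Q : Matrix (Fin r) (Fin r) ℝ, IsOrtho Q ∧ c = frob (Y₂ * Q - Y₁)}

/-!
By the C⋆-identity `‖Y‖⁴ = ‖Yᵀ(YYᵀY)‖ ≤ ‖Y‖ ‖YYᵀY‖`, so `‖YYᵀY‖ ≥ ‖Y‖³`; since the Frobenius norm
dominates the spectral norm, `(YYᵀ - X)Y` has Frobenius norm at least `‖Y‖³ - ‖X‖ ‖Y‖`. For the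
inner product, `⟨(YYᵀ - X)Y, Y⟩ = ⟨YYᵀ - X, YYᵀ⟩`, and Cauchy–Schwarz bounds `⟨X, YYᵀ⟩`. The strict
versions hold because `s ↦ s(s² - t²)` is strictly increasing on `s ≥ t` and `b ↦ a² - ab` is
strictly decreasing for `a > 0`.
-/

section OrderedField

variable {K : Type*} [Field K] [LinearOrder K] [IsStrictOrderedRing K]

lemma pow_three_sub_self_mul_pow_three_lt {s t β : K} (hβ : 1 < β) (ht : 0 ≤ t) (h : β * t < s) :
    (β ^ 3 - β) * t ^ 3 < s ^ 3 - s * t ^ 2 := by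
  have hβt : 0 ≤ β * t := by positivity
  have ht_le : t ^ 2 ≤ (β * t) ^ 2 := pow_le_pow_left₀ ht (le_mul_of_one_le_left ht hβ.le) 2
  have hs_lt : (β * t) ^ 2 < s ^ 2 := pow_lt_pow_left₀ h hβt two_ne_zero
  calc
    (β ^ 3 - β) * t ^ 3 = β * t * ((β * t) ^ 2 - t ^ 2) := by ring
    _ < s * (s ^ 2 - t ^ 2) :=
      mul_lt_mul'' h (sub_lt_sub_right hs_lt _) hβt (sub_nonneg.2 ht_le)
    _ = s ^ 3 - s * t ^ 2 := by ring

lemma one_sub_one_div_mul_sq_lt {a b γ : K} (hγ : 0 < γ) (ha : 0 < a) (h : γ * b < a) :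
    (1 - 1 / γ) * a ^ 2 < a ^ 2 - a * b := by
  have hb : b < a / γ := (lt_div_iff₀' hγ).2 h
  calc
    (1 - 1 / γ) * a ^ 2 = a ^ 2 - a * (a / γ) := by ring
    _ < a ^ 2 - a * b := sub_lt_sub_left (mul_lt_mul_of_pos_left hb ha) _

end OrderedField

section TraceInner

variable {m n k : ℕ}

lemma trInner_eq_trace (A B : Matrix (Fin m) (Fin n) ℝ) : trInner A B = (Aᵀ * B).trace := by
  simp only [trInner, trace, diag_apply, mul_apply, transpose_apply]
  exact Finset.sum_comm

lemma trInner_smul_left (c : ℝ) (A B : Matrix (Fin m) (Fin n) ℝ) :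
    trInner (c • A) B = c * trInner A B := by
  simp only [trInner_eq_trace, transpose_smul, Matrix.smul_mul, trace_smul, smul_eq_mul]

lemma trInner_sub_left (A B C : Matrix (Fin m) (Fin n) ℝ) :
    trInner (A - B) C = trInner A C - trInner B C := by
  simp only [trInner_eq_trace, transpose_sub, Matrix.sub_mul, trace_sub]

lemma trInner_mul_left (A : Matrix (Fin m) (Fin k) ℝ) (C : Matrix (Fin k) (Fin n) ℝ)
    (B : Matrix (Fin m) (Fin n) ℝ) : trInner (A * C) B = trInner A (B * Cᵀ) := by
  rw [trInner_eq_trace, trInner_eq_trace, transpose_mul, Matrix.mul_assoc, trace_mul_comm,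
    Matrix.mul_assoc]

lemma frob_nonneg (A : Matrix (Fin m) (Fin n) ℝ) : 0 ≤ frob A :=
  Real.sqrt_nonneg _

lemma trInner_self (A : Matrix (Fin m) (Fin n) ℝ) : trInner A A = frob A ^ 2 := by
  rw [frob, Real.sq_sqrt (by positivity)]
  simp only [trInner, sq]

lemma trInner_le_frob_mul_frob (A B : Matrix (Fin m) (Fin n) ℝ) :
    trInner A B ≤ frob A * frob B := by
  simp only [trInner, frob, ← Fintype.sum_prod_type']
  exact Real.sum_mul_le_sqrt_mul_sqrt _ _ _

end TraceInner

lemma apply_le_apply_sort_last {α : Type*} [LinearOrder α] {n : ℕ} (f : Fin n → α)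
    (h : n - 1 < n) (i : Fin n) : f i ≤ f (Tuple.sort f ⟨n - 1, h⟩) := by
  have hlast : (Tuple.sort f).symm i ≤ ⟨n - 1, h⟩ :=
    Fin.le_def.2 (Nat.le_sub_one_of_lt (Fin.is_lt _))
  simpa using Tuple.monotone_sort f hlast

section SpectralNorm

open scoped Matrix.Norms.L2Operator

section RCLike

variable {𝕜 m n : Type*} [RCLike 𝕜] [Fintype m] [Fintype n] [DecidableEq n]

lemma l2_opNorm_le_sqrt_sum_norm_sq (A : Matrix m n 𝕜) : ‖A‖ ≤ √(∑ i, ∑ j, ‖A i j‖ ^ 2) := by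
  rw [l2_opNorm_def]
  refine ContinuousLinearMap.opNorm_le_bound _ (Real.sqrt_nonneg _) fun x ↦ ?_
  rw [EuclideanSpace.norm_eq, EuclideanSpace.norm_eq, ← Real.sqrt_mul (by positivity),
    Finset.sum_mul]
  refine Real.sqrt_le_sqrt (Finset.sum_le_sum fun i _ ↦ ?_)
  calc
    ‖∑ j, A i j * x j‖ ^ 2 ≤ (∑ j, ‖A i j‖ * ‖x j‖) ^ 2 := by
      gcongr
      exact norm_sum_le_of_le _ fun j _ ↦ norm_mul_le _ _
    _ ≤ (∑ j, ‖A i j‖ ^ 2) * ∑ j, ‖x j‖ ^ 2 := Finset.sum_mul_sq_le_sq_mul_sq _ _ _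

lemma l2_opNorm_self_mul_conjTranspose [DecidableEq m] (A : Matrix m n 𝕜) : ‖A * Aᴴ‖ = ‖A‖ ^ 2 := by
  simpa only [conjTranspose_conjTranspose, l2_opNorm_conjTranspose, ← sq] using
    l2_opNorm_conjTranspose_mul_self Aᴴ

lemma l2_opNorm_pow_three_le (A : Matrix m n 𝕜) : ‖A‖ ^ 3 ≤ ‖A * Aᴴ * A‖ := by
  classical
  obtain hA | hA := (norm_nonneg A).eq_or_lt
  · simp [← hA]
  refine le_of_mul_le_mul_left ?_ hA
  calc
    ‖A‖ * ‖A‖ ^ 3 = ‖Aᴴ * A‖ * ‖Aᴴ * A‖ := by rw [l2_opNorm_conjTranspose_mul_self]; ring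
    _ = ‖(Aᴴ * A)ᴴ * (Aᴴ * A)‖ := (l2_opNorm_conjTranspose_mul_self _).symm
    _ = ‖Aᴴ * (A * Aᴴ * A)‖ := by
      simp only [conjTranspose_mul, conjTranspose_conjTranspose, Matrix.mul_assoc]
    _ ≤ ‖Aᴴ‖ * ‖A * Aᴴ * A‖ := l2_opNorm_mul _ _
    _ = ‖A‖ * ‖A * Aᴴ * A‖ := by rw [l2_opNorm_conjTranspose]

lemma l2_opNorm_pow_three_sub_le [DecidableEq m] (X : Matrix m m 𝕜) (Y : Matrix m n 𝕜) :
    ‖Y‖ ^ 3 - ‖Y‖ * ‖X‖ ≤ ‖(Y * Yᴴ - X) * Y‖ :=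
  calc
    ‖Y‖ ^ 3 - ‖Y‖ * ‖X‖ ≤ ‖Y * Yᴴ * Y‖ - ‖X * Y‖ := by
      rw [mul_comm ‖Y‖ ‖X‖]
      exact sub_le_sub (l2_opNorm_pow_three_le Y) (l2_opNorm_mul X Y)
    _ ≤ ‖Y * Yᴴ * Y - X * Y‖ := norm_sub_norm_le _ _
    _ = ‖(Y * Yᴴ - X) * Y‖ := by rw [Matrix.sub_mul]

lemma l2_opNorm_eq_norm_eigenvalues {A : Matrix n n 𝕜} (hA : A.IsHermitian) :
    ‖A‖ = ‖hA.eigenvalues‖ := by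
  conv_lhs => rw [hA.spectral_theorem]
  rw [Unitary.conjStarAlgAut_apply, ← Unitary.coe_star, CStarRing.norm_mul_coe_unitary,
    CStarRing.norm_coe_unitary_mul, l2_opNorm_diagonal]
  simp only [Pi.norm_def, Function.comp_apply, ← RCLike.algebraMap_eq_ofReal, nnnorm_algebraMap']

end RCLike

lemma l2_opNorm_le_frob {m n : ℕ} (A : Matrix (Fin m) (Fin n) ℝ) : ‖A‖ ≤ frob A := by
  simpa only [frob, Real.norm_eq_abs, sq_abs] using l2_opNorm_le_sqrt_sum_norm_sq A

lemma eigVal_one_eq_l2_opNorm {n : ℕ} {A : Matrix (Fin n) (Fin n) ℝ} (hA : A.PosSemidef) :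
    eigVal A 1 = ‖A‖ := by
  obtain rfl | hn := n.eq_zero_or_pos
  · simp [eigVal, Subsingleton.elim A 0]
  have hlt : n - 1 < n := Nat.sub_one_lt_of_lt hn
  rw [l2_opNorm_eq_norm_eigenvalues hA.isHermitian, eigVal, dif_pos hA.isHermitian, dif_pos hlt]
  refine le_antisymm ((le_abs_self _).trans (norm_le_pi_norm hA.isHermitian.eigenvalues _)) ?_
  refine (pi_norm_le_iff_of_nonneg (hA.eigenvalues_nonneg _)).2 fun i ↦ ?_
  rw [Real.norm_of_nonneg (hA.eigenvalues_nonneg i)]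
  exact apply_le_apply_sort_last _ hlt i

lemma sval_one_eq_l2_opNorm {p r : ℕ} (Y : Matrix (Fin p) (Fin r) ℝ) : sval Y 1 = ‖Y‖ := by
  rw [sval, ← conjTranspose_eq_transpose_of_trivial,
    eigVal_one_eq_l2_opNorm (posSemidef_conjTranspose_mul_self Y),
    l2_opNorm_conjTranspose_mul_self, Real.sqrt_mul_self (norm_nonneg Y)]

end SpectralNorm

/-- The horizontal lift at `Y` of the Riemannian gradient of `[Y] ↦ ‖Y Yᵀ - X‖_F² / 2` on the
quotient of the full-column-rank `p × r` matrices by `O(r)`, given by its closed formula, which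
makes sense for every `Y`. -/
noncomputable def liftedGrad {p r : ℕ} (X : Matrix (Fin p) (Fin p) ℝ)
    (Y : Matrix (Fin p) (Fin r) ℝ) : Matrix (Fin p) (Fin r) ℝ :=
  (2 : ℝ) • ((Y * Yᵀ - X) * Y)

section LiftedGrad

variable {p r s : ℕ}

open scoped Matrix.Norms.L2Operator in
lemma two_mul_sval_one_pow_three_sub_le_frob_liftedGrad (Z : Matrix (Fin p) (Fin s) ℝ)
    (Y : Matrix (Fin p) (Fin r) ℝ) :
    2 * (sval Y 1 ^ 3 - sval Y 1 * sval Z 1 ^ 2) ≤ frob (liftedGrad (Z * Zᵀ) Y) :=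
  calc
    2 * (sval Y 1 ^ 3 - sval Y 1 * sval Z 1 ^ 2) = 2 * (‖Y‖ ^ 3 - ‖Y‖ * ‖Z * Zᵀ‖) := by
      rw [sval_one_eq_l2_opNorm, sval_one_eq_l2_opNorm, ← l2_opNorm_self_mul_conjTranspose Z,
        conjTranspose_eq_transpose_of_trivial]
    _ ≤ 2 * ‖(Y * Yᵀ - Z * Zᵀ) * Y‖ := by
      gcongr
      exact l2_opNorm_pow_three_sub_le (Z * Zᵀ) Y
    _ = ‖liftedGrad (Z * Zᵀ) Y‖ := by rw [liftedGrad, norm_smul, Real.norm_two]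
    _ ≤ frob (liftedGrad (Z * Zᵀ) Y) := l2_opNorm_le_frob _

lemma trInner_liftedGrad_self (X : Matrix (Fin p) (Fin p) ℝ) (Y : Matrix (Fin p) (Fin r) ℝ) :
    trInner (liftedGrad X Y) Y = 2 * (frob (Y * Yᵀ) ^ 2 - trInner X (Y * Yᵀ)) := by
  rw [liftedGrad, trInner_smul_left, trInner_mul_left, trInner_sub_left, trInner_self]

lemma two_mul_frob_sq_sub_le_trInner_liftedGrad (X : Matrix (Fin p) (Fin p) ℝ)
    (Y : Matrix (Fin p) (Fin r) ℝ) :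
    2 * frob (Y * Yᵀ) ^ 2 - 2 * frob (Y * Yᵀ) * frob X ≤ trInner (liftedGrad X Y) Y := by
  rw [trInner_liftedGrad_self]
  linarith [trInner_le_frob_mul_frob X (Y * Yᵀ)]

end LiftedGrad

theorem stmt10_general {p r s : ℕ} (Ystar : Matrix (Fin p) (Fin s) ℝ)
    (Y : Matrix (Fin p) (Fin r) ℝ) (X : Matrix (Fin p) (Fin p) ℝ) (hX : X = Ystar * Ystarᵀ) :
    (frob (liftedGrad X Y) ≥ 2 * ((sval Y 1) ^ 3 - sval Y 1 * (sval Ystar 1) ^ 2)) ∧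
    (∀ β : ℝ, 1 < β → sval Y 1 > β * sval Ystar 1 →
      frob (liftedGrad X Y) > 2 * (β ^ 3 - β) * (sval Ystar 1) ^ 3) ∧
    (trInner (liftedGrad X Y) Y ≥ 2 * (frob (Y * Yᵀ)) ^ 2 - 2 * frob (Y * Yᵀ) * frob X) ∧
    (∀ γ : ℝ, 1 < γ → frob (Y * Yᵀ) > γ * frob X →
      trInner (liftedGrad X Y) Y > 2 * (1 - 1 / γ) * (frob (Y * Yᵀ)) ^ 2) := by
  subst hX
  have hnorm := two_mul_sval_one_pow_three_sub_le_frob_liftedGrad Ystar Y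
  have hinner := two_mul_frob_sq_sub_le_trInner_liftedGrad (Ystar * Ystarᵀ) Y
  refine ⟨hnorm, fun β hβ hs ↦ ?_, hinner, fun γ hγ hf ↦ ?_⟩
  · have hYstar : 0 ≤ sval Ystar 1 := Real.sqrt_nonneg _
    linarith [pow_three_sub_self_mul_pow_three_lt hβ hYstar hs]
  · have hγ_pos : 0 < γ := one_pos.trans hγ
    have hpos : 0 < frob (Y * Yᵀ) := (mul_nonneg hγ_pos.le (frob_nonneg _)).trans_lt hf
    linarith [one_sub_one_div_mul_sq_lt hγ_pos hpos hf]

/-- regions with large Riemannian gradient of `H`: lower bounds for the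
lifted gradient of `H` when the spectral norm of `Y` is large, and for its inner product
with `Y` when the Frobenius norm of `Y Yᵀ` is large. -/
theorem stmt10 {p r : ℕ} (Ystar Y : Matrix (Fin p) (Fin r) ℝ)
    (hYs : Ystar.rank = r) (hY : Y.rank = r)
    (X : Matrix (Fin p) (Fin p) ℝ) (hX : X = Ystar * Ystarᵀ) :
    (frob ((2 : ℝ) • ((Y * Yᵀ - X) * Y)) ≥
      2 * ((sval Y 1) ^ 3 - sval Y 1 * (sval Ystar 1) ^ 2)) ∧
    (∀ β : ℝ, 1 < β → sval Y 1 > β * sval Ystar 1 →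
      frob ((2 : ℝ) • ((Y * Yᵀ - X) * Y)) > 2 * (β ^ 3 - β) * (sval Ystar 1) ^ 3) ∧
    (trInner ((2 : ℝ) • ((Y * Yᵀ - X) * Y)) Y ≥
      2 * (frob (Y * Yᵀ)) ^ 2 - 2 * frob (Y * Yᵀ) * frob X) ∧
    (∀ γ : ℝ, 1 < γ → frob (Y * Yᵀ) > γ * frob X →
      trInner ((2 : ℝ) • ((Y * Yᵀ - X) * Y)) Y > 2 * (1 - 1 / γ) * (frob (Y * Yᵀ)) ^ 2) :=
  stmt10_general Ystar Y X hX
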